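/- (a) For H ∈ ℂ(X,Y,t) written as A/B with A, B coprime polynomials, and for any (u,v) in the orbit 𝒪, the evaluation H(u,v,1/S(x,y)) is a well-defined element of 𝕂 (i.e. B(u,v,1/S(x,y)) ≠ 0) if and only if H is regular, i.e. K̃ does not divide B. (b) The kernel of the ℂ-algebra homomorphism ℂ[X,Y,t] → 𝕂 sending X ↦ x, Y ↦ y, t ↦ 1/S(x,y) is the principal ideal generated by K̃, and the induced isomorphism of the field of equivalence classes of regular fractions modulo K̃ onto k(x,y) maps ℂ(t) onto k, ℂ(X,t) onto k(x) and ℂ(Y,t) onto k(y). -/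

import Mathlib

open IntermediateField
open scoped BigOperators Classical

set_option synthInstance.maxHeartbeats 1000000
set_option maxHeartbeats 1600000

noncomputable section

namespace QuadrantWalk

variable {K : Type} [Field K] [Algebra ℂ K]

/-- Evaluation of the step (Laurent) polynomial `S(X,Y) = ∑ w_{i,j} X^i Y^j`
    at a pair of elements of a field. -/
def stepEval (St : Finset (ℤ × ℤ)) (w : ℤ × ℤ → ℂ) (u v : K) : K :=
  ∑ p ∈ St, algebraMap ℂ K (w p) * u ^ p.1 * v ^ p.2

/-- The step polynomial involves both `X` and `Y`. -/
def NotUnivariate (St : Finset (ℤ × ℤ)) : Prop :=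
  (∃ p ∈ St, ∃ q ∈ St, p.1 ≠ q.1) ∧ ∃ p ∈ St, ∃ q ∈ St, p.2 ≠ q.2

/-- The kernel polynomial `K̃(X,Y,t) = X^mx * Y^my * (1 - t·S(X,Y))` as an element of
`ℂ[X,Y,t]`, with variables `0 ↦ X`, `1 ↦ Y`, `2 ↦ t`. -/
def kernelPoly (St : Finset (ℤ × ℤ)) (w : ℤ × ℤ → ℂ) (mx my : ℕ) :
    MvPolynomial (Fin 3) ℂ :=
  MvPolynomial.X 0 ^ mx * MvPolynomial.X 1 ^ my -
    MvPolynomial.X 2 *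
      ∑ p ∈ St, MvPolynomial.C (w p) *
        MvPolynomial.X 0 ^ (p.1 + (mx : ℤ)).toNat *
        MvPolynomial.X 1 ^ (p.2 + (my : ℤ)).toNat

/-- `-mx` (resp. `-my`) is the smallest `X`-exponent (resp. `Y`-exponent) of the model. -/
structure ExponentBounds (St : Finset (ℤ × ℤ)) (mx my : ℕ) : Prop where
  lowerX : ∀ p ∈ St, -(mx : ℤ) ≤ p.1
  lowerY : ∀ p ∈ St, -(my : ℤ) ≤ p.2
  attainX : ∃ p ∈ St, p.1 = -(mx : ℤ)
  attainY : ∃ p ∈ St, p.2 = -(my : ℤ)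

/-- `x`-adjacency : equal first coordinates and equal values of `S`. -/
def XAdj (St : Finset (ℤ × ℤ)) (w : ℤ × ℤ → ℂ) (a b : K × K) : Prop :=
  a.1 = b.1 ∧ stepEval St w a.1 a.2 = stepEval St w b.1 b.2

/-- `y`-adjacency : equal second coordinates and equal values of `S`. -/
def YAdj (St : Finset (ℤ × ℤ)) (w : ℤ × ℤ → ℂ) (a b : K × K) : Prop :=
  a.2 = b.2 ∧ stepEval St w a.1 a.2 = stepEval St w b.1 b.2

/-- Adjacency. -/
def Adj (St : Finset (ℤ × ℤ)) (w : ℤ × ℤ → ℂ) (a b : K × K) : Prop :=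
  XAdj St w a b ∨ YAdj St w a b

/-- The orbit of the walk: the equivalence class of `(x,y)` under the
reflexive-transitive closure of adjacency. -/
def orbit (St : Finset (ℤ × ℤ)) (w : ℤ × ℤ → ℂ) (x y : K) : Set (K × K) :=
  {a | Relation.ReflTransGen (Adj St w) (x, y) a}

/-- `k = ℂ(S(x,y))`. -/
def kF (St : Finset (ℤ × ℤ)) (w : ℤ × ℤ → ℂ) (x y : K) : IntermediateField ℂ K :=
  adjoin ℂ {stepEval St w x y}

/-- `k(x) = ℂ(x, S(x,y))`. -/
def kxF (St : Finset (ℤ × ℤ)) (w : ℤ × ℤ → ℂ) (x y : K) : IntermediateField ℂ K :=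
  adjoin ℂ {x, stepEval St w x y}

/-- `k(y) = ℂ(y, S(x,y))`. -/
def kyF (St : Finset (ℤ × ℤ)) (w : ℤ × ℤ → ℂ) (x y : K) : IntermediateField ℂ K :=
  adjoin ℂ {y, stepEval St w x y}

/-- `k(x,y) = ℂ(x,y)`. -/
def kxyF (x y : K) : IntermediateField ℂ K := adjoin ℂ {x, y}

/-- `k(𝒪)`: the subfield generated over `k` by all coordinates of the orbit. -/
def orbitF (St : Finset (ℤ × ℤ)) (w : ℤ × ℤ → ℂ) (x y : K) : IntermediateField ℂ K :=
  adjoin ℂ ({stepEval St w x y} ∪ {z | ∃ a ∈ orbit St w x y, z = a.1 ∨ z = a.2})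

/-- The standing hypotheses: nonzero weights, a non-univariate step polynomial,
`x, y` algebraically independent over `ℂ`, and `𝕂` an algebraic closure of `ℂ(x,y)`. -/
structure Setting (St : Finset (ℤ × ℤ)) (w : ℤ × ℤ → ℂ) (x y : K) : Prop where
  weight_ne : ∀ p ∈ St, w p ≠ 0
  notUniv : NotUnivariate St
  indep : AlgebraicIndependent ℂ ![x, y]
  algClosed : IsAlgClosed K
  algebraic : Algebra.IsAlgebraic (kxyF x y) K

lemma self_mem_orbit (St : Finset (ℤ × ℤ)) (w : ℤ × ℤ → ℂ) (x y : K) :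
    (x, y) ∈ orbit St w x y := Relation.ReflTransGen.refl

lemma x_mem_orbitF (St : Finset (ℤ × ℤ)) (w : ℤ × ℤ → ℂ) (x y : K) :
    x ∈ orbitF St w x y := by
  apply subset_adjoin
  exact Set.mem_union_right _ ⟨(x, y), self_mem_orbit St w x y, Or.inl rfl⟩

lemma y_mem_orbitF (St : Finset (ℤ × ℤ)) (w : ℤ × ℤ → ℂ) (x y : K) :
    y ∈ orbitF St w x y := by
  apply subset_adjoin
  exact Set.mem_union_right _ ⟨(x, y), self_mem_orbit St w x y, Or.inr rfl⟩

lemma S_mem_orbitF (St : Finset (ℤ × ℤ)) (w : ℤ × ℤ → ℂ) (x y : K) :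
    stepEval St w x y ∈ orbitF St w x y := by
  apply subset_adjoin
  exact Set.mem_union_left _ rfl

lemma x_mem_kxF (St : Finset (ℤ × ℤ)) (w : ℤ × ℤ → ℂ) (x y : K) :
    x ∈ kxF St w x y :=
  subset_adjoin ℂ _ (Set.mem_insert _ _)

lemma S_mem_kxF (St : Finset (ℤ × ℤ)) (w : ℤ × ℤ → ℂ) (x y : K) :
    stepEval St w x y ∈ kxF St w x y :=
  subset_adjoin ℂ _ (Set.mem_insert_of_mem _ rfl)

lemma y_mem_kyF (St : Finset (ℤ × ℤ)) (w : ℤ × ℤ → ℂ) (x y : K) :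
    y ∈ kyF St w x y :=
  subset_adjoin ℂ _ (Set.mem_insert _ _)

lemma S_mem_kyF (St : Finset (ℤ × ℤ)) (w : ℤ × ℤ → ℂ) (x y : K) :
    stepEval St w x y ∈ kyF St w x y :=
  subset_adjoin ℂ _ (Set.mem_insert_of_mem _ rfl)

/-- The subgroup of `ℂ`-automorphisms of `M` fixing the subfield `E` pointwise. -/
def fixingAuts (E M : IntermediateField ℂ K) : Subgroup (↥M ≃ₐ[ℂ] ↥M) where
  carrier := {σ | ∀ (z : K) (_ : z ∈ E) (hzM : z ∈ M), σ ⟨z, hzM⟩ = ⟨z, hzM⟩}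
  one_mem' := fun _ _ _ => rfl
  mul_mem' := by
    intro σ τ hσ hτ z hzE hzM
    show σ (τ ⟨z, hzM⟩) = ⟨z, hzM⟩
    rw [hτ z hzE hzM, hσ z hzE hzM]
  inv_mem' := by
    intro σ hσ z hzE hzM
    show σ.symm ⟨z, hzM⟩ = ⟨z, hzM⟩
    conv_lhs => rw [← hσ z hzE hzM]
    exact σ.symm_apply_apply _

/-- The Galois group `G_x = Gal(k(𝒪)|k(x))`. -/
def Gx (St : Finset (ℤ × ℤ)) (w : ℤ × ℤ → ℂ) (x y : K) :
    Subgroup (↥(orbitF St w x y) ≃ₐ[ℂ] ↥(orbitF St w x y)) :=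
  fixingAuts (kxF St w x y) (orbitF St w x y)

/-- The Galois group `G_y = Gal(k(𝒪)|k(y))`. -/
def Gy (St : Finset (ℤ × ℤ)) (w : ℤ × ℤ → ℂ) (x y : K) :
    Subgroup (↥(orbitF St w x y) ≃ₐ[ℂ] ↥(orbitF St w x y)) :=
  fixingAuts (kyF St w x y) (orbitF St w x y)

/-- The Galois group `G_{xy} = Gal(k(𝒪)|k(x,y))`. -/
def Gxy (St : Finset (ℤ × ℤ)) (w : ℤ × ℤ → ℂ) (x y : K) :
    Subgroup (↥(orbitF St w x y) ≃ₐ[ℂ] ↥(orbitF St w x y)) :=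
  fixingAuts (kxyF x y) (orbitF St w x y)

/-- Extend an automorphism of an intermediate field to a map on all of `K`
(by the identity outside). -/
def extendAut {M : IntermediateField ℂ K} (σ : ↥M ≃ₐ[ℂ] ↥M) (z : K) : K :=
  if h : z ∈ M then (σ ⟨z, h⟩ : K) else z

/-- The coordinate-wise action of an automorphism on a `0`-chain. -/
def actChain {M : IntermediateField ℂ K} (σ : ↥M ≃ₐ[ℂ] ↥M)
    (γ : (K × K) →₀ ℂ) : (K × K) →₀ ℂ :=
  Finsupp.mapDomain (Prod.map (extendAut σ) (extendAut σ)) γ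

/-- Evaluation of a polynomial `P(X,Y,t)` at `(u, v, 1/S(x,y))` for `(u,v) = a`. -/
def evalPt (St : Finset (ℤ × ℤ)) (w : ℤ × ℤ → ℂ) (x y : K)
    (P : MvPolynomial (Fin 3) ℂ) (a : K × K) : K :=
  MvPolynomial.aeval ![a.1, a.2, (stepEval St w x y)⁻¹] P

/-- Evaluation of a polynomial `P(X,Y,t)` at `(x, y, 1/S(x,y))`. -/
def evalXY (St : Finset (ℤ × ℤ)) (w : ℤ × ℤ → ℂ) (x y : K)
    (P : MvPolynomial (Fin 3) ℂ) : K :=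
  evalPt St w x y P (x, y)

/-- Evaluation of the fraction `A/B` at `(a.1, a.2, 1/S(x,y))`. -/
def fracEval (St : Finset (ℤ × ℤ)) (w : ℤ × ℤ → ℂ) (x y : K)
    (A B : MvPolynomial (Fin 3) ℂ) (a : K × K) : K :=
  evalPt St w x y A a / evalPt St w x y B a

/-- Evaluation (orbit sum) of the fraction `A/B` on a `0`-chain. -/
def chainEval (St : Finset (ℤ × ℤ)) (w : ℤ × ℤ → ℂ) (x y : K)
    (A B : MvPolynomial (Fin 3) ℂ) (γ : (K × K) →₀ ℂ) : K :=
  γ.sum fun a c => algebraMap ℂ K c * fracEval St w x y A B a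

/-- A `0`-chain cancels decoupled fractions: the orbit sum of every regular fraction
of the form `F(X,t) + G(Y,t)` on it vanishes. -/
def CancelsDecoupled (St : Finset (ℤ × ℤ)) (w : ℤ × ℤ → ℂ) (mx my : ℕ)
    (x y : K) (α : (K × K) →₀ ℂ) : Prop :=
  ∀ A₁ B₁ A₂ B₂ : MvPolynomial (Fin 3) ℂ,
    A₁ ∈ MvPolynomial.supported ℂ ({0, 2} : Set (Fin 3)) →
    B₁ ∈ MvPolynomial.supported ℂ ({0, 2} : Set (Fin 3)) →
    A₂ ∈ MvPolynomial.supported ℂ ({1, 2} : Set (Fin 3)) →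
    B₂ ∈ MvPolynomial.supported ℂ ({1, 2} : Set (Fin 3)) →
    ¬ kernelPoly St w mx my ∣ B₁ → ¬ kernelPoly St w mx my ∣ B₂ →
    (α.sum fun a c =>
      algebraMap ℂ K c * (fracEval St w x y A₁ B₁ a + fracEval St w x y A₂ B₂ a)) = 0

/-- The field of fractions `ℂ(X,Y,t)`. -/
abbrev FF : Type := FractionRing (MvPolynomial (Fin 3) ℂ)

/-- The inclusion of `ℂ[X,Y,t]` into `ℂ(X,Y,t)`. -/
def toFF (P : MvPolynomial (Fin 3) ℂ) : FF := algebraMap (MvPolynomial (Fin 3) ℂ) FF P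

/-- The regular fraction `A/B` admits a Galois decoupling:
`A/B = F + G + K̃·R` with `F ∈ ℂ(X,t)`, `G ∈ ℂ(Y,t)` and `R` regular. -/
def AdmitsDecoupling (St : Finset (ℤ × ℤ)) (w : ℤ × ℤ → ℂ) (mx my : ℕ)
    (A B : MvPolynomial (Fin 3) ℂ) : Prop :=
  ∃ F₁ F₂ G₁ G₂ R₁ R₂ : MvPolynomial (Fin 3) ℂ,
    F₁ ∈ MvPolynomial.supported ℂ ({0, 2} : Set (Fin 3)) ∧
    F₂ ∈ MvPolynomial.supported ℂ ({0, 2} : Set (Fin 3)) ∧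
    G₁ ∈ MvPolynomial.supported ℂ ({1, 2} : Set (Fin 3)) ∧
    G₂ ∈ MvPolynomial.supported ℂ ({1, 2} : Set (Fin 3)) ∧
    ¬ kernelPoly St w mx my ∣ F₂ ∧ ¬ kernelPoly St w mx my ∣ G₂ ∧
    ¬ kernelPoly St w mx my ∣ R₂ ∧
    toFF A / toFF B =
      toFF F₁ / toFF F₂ + toFF G₁ / toFF G₂ +
        toFF (kernelPoly St w mx my) * (toFF R₁ / toFF R₂)

/-- `(I, J) = (A/B, Cc/D)` is a pair of Galois invariants: `I - J = K̃·R` with `R` regular. -/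
def IsInvariantPair (St : Finset (ℤ × ℤ)) (w : ℤ × ℤ → ℂ) (mx my : ℕ)
    (A B Cc D : MvPolynomial (Fin 3) ℂ) : Prop :=
  ∃ R₁ R₂ : MvPolynomial (Fin 3) ℂ, ¬ kernelPoly St w mx my ∣ R₂ ∧
    toFF A / toFF B - toFF Cc / toFF D =
      toFF (kernelPoly St w mx my) * (toFF R₁ / toFF R₂)

/-- A constant pair of Galois invariants: both members are equivalent to a
common fraction `c ∈ ℂ(t)` modulo `K̃`. -/
def IsConstantPair (St : Finset (ℤ × ℤ)) (w : ℤ × ℤ → ℂ) (mx my : ℕ)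
    (A B Cc D : MvPolynomial (Fin 3) ℂ) : Prop :=
  IsInvariantPair St w mx my A B Cc D ∧
  ∃ c₁ c₂ : MvPolynomial (Fin 3) ℂ,
    c₁ ∈ MvPolynomial.supported ℂ ({2} : Set (Fin 3)) ∧
    c₂ ∈ MvPolynomial.supported ℂ ({2} : Set (Fin 3)) ∧ c₂ ≠ 0 ∧
    IsInvariantPair St w mx my A B c₁ c₂ ∧ IsInvariantPair St w mx my Cc D c₁ c₂

/-- `(γx, γy)` is a pseudo-decoupling of `(x,y)`. -/
def PseudoDecoupling (St : Finset (ℤ × ℤ)) (w : ℤ × ℤ → ℂ) (mx my : ℕ)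
    (x y : K) (γx γy : (K × K) →₀ ℂ) : Prop :=
  ∀ A B : MvPolynomial (Fin 3) ℂ, ¬ kernelPoly St w mx my ∣ B →
    AdmitsDecoupling St w mx my A B →
      fracEval St w x y A B (x, y) =
          chainEval St w x y A B γx + chainEval St w x y A B γy ∧
        chainEval St w x y A B γx ∈ kxF St w x y ∧
        chainEval St w x y A B γy ∈ kyF St w x y

/-- `(gx, gy, a)` is a decoupling of `(x,y)` in the orbit. -/
def IsDecoupling (St : Finset (ℤ × ℤ)) (w : ℤ × ℤ → ℂ) (mx my : ℕ)
    (x y : K) (gx gy a : (K × K) →₀ ℂ) : Prop :=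
  Finsupp.single (x, y) (1 : ℂ) = gx + gy + a ∧
  (∀ σ ∈ Gx St w x y, actChain σ gx = gx) ∧
  (∀ σ ∈ Gy St w x y, actChain σ gy = gy) ∧
  CancelsDecoupled St w mx my x y a

/-- The `x`-part of the boundary of a `1`-chain. -/
def boundaryX (St : Finset (ℤ × ℤ)) (w : ℤ × ℤ → ℂ)
    (c : ((K × K) × (K × K)) →₀ ℂ) : (K × K) →₀ ℂ :=
  c.sum fun e coeff =>
    if XAdj St w e.1 e.2 then
      coeff • (Finsupp.single e.2 (1 : ℂ) - Finsupp.single e.1 (1 : ℂ)) else 0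

/-- The `y`-part of the boundary of a `1`-chain. -/
def boundaryY (St : Finset (ℤ × ℤ)) (w : ℤ × ℤ → ℂ)
    (c : ((K × K) × (K × K)) →₀ ℂ) : (K × K) →₀ ℂ :=
  c.sum fun e coeff =>
    if YAdj St w e.1 e.2 then
      coeff • (Finsupp.single e.2 (1 : ℂ) - Finsupp.single e.1 (1 : ℂ)) else 0

/-- The `0`-chain induced by a bicolored loop. -/
def IsBicoloredChain (St : Finset (ℤ × ℤ)) (w : ℤ × ℤ → ℂ) (x y : K)
    (α : (K × K) →₀ ℂ) : Prop :=
  ∃ (n : ℕ) (b : ℕ → K × K), 0 < n ∧ b (2 * n) = b 0 ∧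
    (∀ j < 2 * n, b j ∈ orbit St w x y) ∧
    (∀ i < n, XAdj St w (b (2 * i)) (b (2 * i + 1)) ∧
      YAdj St w (b (2 * i + 1)) (b (2 * i + 2))) ∧
    α = ∑ j ∈ Finset.range (2 * n), ((-1 : ℂ) ^ (j + 1)) • Finsupp.single (b j) (1 : ℂ)

/-- The `0`-chain `ω = (1/|𝒪|) ∑_{a ∈ 𝒪} a`. -/
def omegaChain (St : Finset (ℤ × ℤ)) (w : ℤ × ℤ → ℂ) (x y : K)
    (h : (orbit St w x y).Finite) : (K × K) →₀ ℂ :=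
  ((h.toFinset.card : ℂ))⁻¹ • ∑ a ∈ h.toFinset, Finsupp.single a (1 : ℂ)

/-- The average `[G]·γ = (1/|G|) ∑_{σ ∈ G} σ·γ` of a `0`-chain under a group. -/
def groupAverage {M : IntermediateField ℂ K} (G : Subgroup (↥M ≃ₐ[ℂ] ↥M))
    (γ : (K × K) →₀ ℂ) : (K × K) →₀ ℂ :=
  ((Nat.card G : ℂ))⁻¹ • ∑ᶠ σ ∈ (G : Set (↥M ≃ₐ[ℂ] ↥M)), actChain σ γ

/-- `ℂ[X,t]` (two variables: `0` and `1`). -/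
abbrev MvP2 : Type := MvPolynomial (Fin 2) ℂ

/-- `ℂ(X,t)`, the fraction field of `ℂ[X,t]`. -/
abbrev CXt : Type := FractionRing MvP2

/-- Constants `ℂ → ℂ(X,t)`. -/
def cconst : ℂ →+* CXt := (algebraMap MvP2 CXt).comp (MvPolynomial.C)

/-- The first generator of `ℂ(X,t)`. -/
def gen0 : CXt := algebraMap MvP2 CXt (MvPolynomial.X 0)

/-- The second generator of `ℂ(X,t)`. -/
def gen1 : CXt := algebraMap MvP2 CXt (MvPolynomial.X 1)

/-- The kernel polynomial viewed as a polynomial in `Y` over `ℂ(X,t)`. -/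
def kernelInY (St : Finset (ℤ × ℤ)) (w : ℤ × ℤ → ℂ) (mx my : ℕ) :
    Polynomial CXt :=
  MvPolynomial.eval₂ ((Polynomial.C : CXt →+* Polynomial CXt).comp cconst)
    ![Polynomial.C gen0, Polynomial.X, Polynomial.C gen1]
    (kernelPoly St w mx my)

/-- The kernel polynomial viewed as a polynomial in `X` over `ℂ(Y,t)`. -/
def kernelInX (St : Finset (ℤ × ℤ)) (w : ℤ × ℤ → ℂ) (mx my : ℕ) :
    Polynomial CXt :=
  MvPolynomial.eval₂ ((Polynomial.C : CXt →+* Polynomial CXt).comp cconst)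
    ![Polynomial.X, Polynomial.C gen0, Polynomial.C gen1]
    (kernelPoly St w mx my)

/-- The kernel polynomial viewed as a polynomial in `X, Y` over `ℂ(t)`. -/
def kernelInXY (St : Finset (ℤ × ℤ)) (w : ℤ × ℤ → ℂ) (mx my : ℕ) :
    MvPolynomial (Fin 2) (RatFunc ℂ) :=
  MvPolynomial.eval₂
    ((MvPolynomial.C : RatFunc ℂ →+* MvPolynomial (Fin 2) (RatFunc ℂ)).comp
      (RatFunc.C : ℂ →+* RatFunc ℂ))
    ![MvPolynomial.X 0, MvPolynomial.X 1, MvPolynomial.C RatFunc.X]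
    (kernelPoly St w mx my)

/-- The specialization `K̃(x, Y, 1/S(x,y))` as a polynomial in `Y` over `k(x)`. -/
def kernelAtX (St : Finset (ℤ × ℤ)) (w : ℤ × ℤ → ℂ) (mx my : ℕ) (x y : K) :
    Polynomial ↥(kxF St w x y) :=
  MvPolynomial.aeval
    ![Polynomial.C (⟨x, x_mem_kxF St w x y⟩ : kxF St w x y), Polynomial.X,
      Polynomial.C (⟨(stepEval St w x y)⁻¹, inv_mem (S_mem_kxF St w x y)⟩ : kxF St w x y)]
    (kernelPoly St w mx my)

/-- The specialization `K̃(X, y, 1/S(x,y))` as a polynomial in `X` over `k(y)`. -/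
def kernelAtY (St : Finset (ℤ × ℤ)) (w : ℤ × ℤ → ℂ) (mx my : ℕ) (x y : K) :
    Polynomial ↥(kyF St w x y) :=
  MvPolynomial.aeval
    ![Polynomial.X, Polynomial.C (⟨y, y_mem_kyF St w x y⟩ : kyF St w x y),
      Polynomial.C (⟨(stepEval St w x y)⁻¹, inv_mem (S_mem_kyF St w x y)⟩ : kyF St w x y)]
    (kernelPoly St w mx my)

/-- Values of regular fractions with numerator and denominator supported on a set
of variables. -/
def regRange (St : Finset (ℤ × ℤ)) (w : ℤ × ℤ → ℂ) (x y : K) (mx my : ℕ)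
    (s : Set (Fin 3)) : Set K :=
  {z | ∃ A B : MvPolynomial (Fin 3) ℂ,
    A ∈ MvPolynomial.supported ℂ s ∧ B ∈ MvPolynomial.supported ℂ s ∧
    ¬ kernelPoly St w mx my ∣ B ∧ z = evalXY St w x y A / evalXY St w x y B}

end QuadrantWalk
namespace QuadrantWalk

/-!
Every point `(u, v)` of the orbit is again an algebraically independent pair with
`S(u, v) = S(x, y)`: the value `S(u, v)` is transcendental over `ℂ(u)`, so an `x`-neighbour `v'` of
`v` cannot be algebraic over `ℂ(u)`, and symmetrically for `y`-neighbours. At such a point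
`1 / S(u, v)` is the quotient `M(u, v) / N(u, v)`, where `K̃ = M - t N` with `M = X^mx Y^my` and `N`
coprime in `ℂ[X, Y]`. Gauss's lemma over the factorial ring `ℂ[X, Y]` then says that a polynomial
in `t` vanishes at this quotient exactly when it is a multiple of `M - t N`.
-/

section FieldExtension

variable {F K : Type*} [Field F] [Field K] [Algebra F K]

lemma linearIndependent_pow_of_transcendental {R A : Type*} [CommRing R] [Ring A] [Algebra R A]
    {v : A} (hv : Transcendental R v) : LinearIndependent R fun n : ℕ => v ^ n := by
  simpa [Function.comp_def] using (Polynomial.basisMonomials R).linearIndependent.map'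
    (Polynomial.aeval v).toLinearMap (LinearMap.ker_eq_bot.2 (transcendental_iff_injective.1 hv))

lemma linearIndependent_zpow_of_transcendental {v : K} (hv : Transcendental F v) :
    LinearIndependent F fun n : ℤ => v ^ n := by
  have hv₀ : v ≠ 0 := fun h => hv (h ▸ isAlgebraic_zero)
  rw [linearIndependent_iff']
  intro s c hc i hi
  obtain ⟨b, hb⟩ := s.bddBelow
  have hinj : Set.InjOn (fun j : ℤ => (j - b).toNat) s := fun j hj k hk hjk => by
    have := hb hj
    have := hb hk
    grind
  have hshift : ∑ j ∈ s, c j • v ^ (j - b).toNat = 0 := by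
    calc ∑ j ∈ s, c j • v ^ (j - b).toNat
        = ∑ j ∈ s, c j • (v ^ j * v ^ (-b)) := Finset.sum_congr rfl fun j hj => by
          rw [← zpow_natCast, Int.toNat_of_nonneg (sub_nonneg.2 (hb hj)), sub_eq_add_neg,
            zpow_add₀ hv₀]
      _ = (∑ j ∈ s, c j • v ^ j) * v ^ (-b) := by simp only [Finset.sum_mul, smul_mul_assoc]
      _ = 0 := by rw [hc, zero_mul]
  exact linearIndepOn_finset_iff.1
    (((linearIndependent_pow_of_transcendental hv).linearIndepOn _).comp_of_image hinj)
    c hshift i hi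

lemma sum_fiber_eq_of_sum_zpow_eq {ι : Type*} {v : K} (hv : Transcendental F v) (t : Finset ι)
    (c : ι → F) (e : ι → ℤ) {s : F}
    (h : ∑ i ∈ t, algebraMap F K (c i) * v ^ e i = algebraMap F K s) (j : ℤ) :
    ∑ i ∈ t with e i = j, c i = if j = 0 then s else 0 := by
  have hzero : ∑ i ∈ t, Finsupp.single (e i) (c i) - Finsupp.single 0 s = 0 :=
    (linearIndependent_iff.1 (linearIndependent_zpow_of_transcendental hv)) _ <| by
      simp [Finsupp.linearCombination_single, Algebra.smul_def, h]
  have hj := DFunLike.congr_fun (sub_eq_zero.1 hzero) j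
  simpa [Finsupp.finsetSum_apply, Finsupp.single_apply, Finset.sum_filter, eq_comm] using hj

open scoped algebraAdjoinAdjoin in
lemma transcendental_adjoin_iff (S : Set K) {v : K} :
    Transcendental (Algebra.adjoin F S) v ↔ Transcendental (adjoin F S) v :=
  (IsFractionRing.isAlgebraic_iff (Algebra.adjoin F S) (adjoin F S) K).not

lemma algebraicIndependent_pair_iff {u v : K} :
    AlgebraicIndependent F ![u, v] ↔ Transcendental F u ∧ Transcendental F⟮u⟯ v := by
  have huniv : (insert 1 {0} : Set (Fin 2)) = Set.univ := by
    ext i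
    fin_cases i <;> simp
  rw [← AlgebraicIndepOn.univ, ← huniv, AlgebraicIndepOn.insert_iff (by simp),
    Set.image_singleton, transcendental_adjoin_iff, AlgebraicIndepOn,
    algebraicIndependent_unique_type_iff]
  rfl

lemma algebraicIndependent_pair_swap {u v : K} (h : AlgebraicIndependent F ![u, v]) :
    AlgebraicIndependent F ![v, u] := by
  convert h.comp (Equiv.swap 0 1) (Equiv.injective _) using 1
  funext i
  fin_cases i <;> simp

lemma mem_adjoin_image_iff {σ : Type*} (g : σ → K) (s : Set σ) {z : K} :
    z ∈ adjoin F (g '' s) ↔ ∃ A ∈ MvPolynomial.supported F s, ∃ B ∈ MvPolynomial.supported F s,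
      z = MvPolynomial.aeval g A / MvPolynomial.aeval g B := by
  have hmap : Algebra.adjoin F (g '' s) =
      (MvPolynomial.supported F s).map (MvPolynomial.aeval g) := by
    rw [MvPolynomial.supported, AlgHom.map_adjoin, Set.image_image]
    simp only [MvPolynomial.aeval_X]
  simp [mem_adjoin_iff_div, hmap, Subalgebra.mem_map, eq_comm]

lemma adjoin_insert_inv (a : K) (T : Set K) :
    adjoin F (insert a⁻¹ T) = adjoin F (insert a T) := by
  have hle (b : K) : adjoin F (insert b⁻¹ T) ≤ adjoin F (insert b T) :=
    adjoin_le_iff.2 <| Set.insert_subset (inv_mem (subset_adjoin F _ (Set.mem_insert b T)))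
      ((Set.subset_insert b T).trans (subset_adjoin F _))
  exact (hle a).antisymm (by simpa using hle a⁻¹)

lemma adjoin_insert_of_mem {a : K} {T : Set K} (ha : a ∈ adjoin F T) :
    adjoin F (insert a T) = adjoin F T :=
  (adjoin_le_iff.2 (Set.insert_subset ha (subset_adjoin F T))).antisymm
    (adjoin.mono F _ _ (Set.subset_insert a T))

end FieldExtension

section GaussLemma

open Polynomial

variable {R K : Type*} [CommRing R] [Field K]

lemma isPrimitive_C_sub_X_mul_C {a b : R} (hab : IsRelPrime a b) :
    (C a - X * C b : R[X]).IsPrimitive := by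
  intro r hr
  rw [C_dvd_iff_dvd_coeff] at hr
  exact hab (by simpa using hr 0) (by simpa using hr 1)

lemma C_sub_X_mul_C_dvd_iff_eval_div_eq_zero {a b : K} (hb : b ≠ 0) {P : K[X]} :
    C a - X * C b ∣ P ↔ P.eval (a / b) = 0 := by
  have hfactor : C a - X * C b = (X - C (a / b)) * C (-b) := by
    rw [sub_mul, ← C_mul, mul_neg, div_mul_cancel₀ a hb, C_neg, C_neg]
    ring
  rw [hfactor, (isUnit_C.2 hb.isUnit.neg).mul_right_dvd, dvd_iff_isRoot, IsRoot.def]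

lemma C_sub_X_mul_C_dvd_iff_eval₂_div_eq_zero [IsDomain R] [IsGCDMonoid R] {f : R →+* K}
    (hf : Function.Injective f) {a b : R} (hab : IsRelPrime a b) (hb : b ≠ 0) {P : R[X]} :
    C a - X * C b ∣ P ↔ P.eval₂ f (f a / f b) = 0 := by
  let L := FractionRing R
  have hbL : algebraMap R L b ≠ 0 := (FaithfulSMul.algebraMap_eq_zero_iff R L).not.2 hb
  rw [(isPrimitive_C_sub_X_mul_C hab).dvd_iff_fraction_map_dvd_fraction_map L]
  have hmap : (C a - X * C b).map (algebraMap R L) =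
      C (algebraMap R L a) - X * C (algebraMap R L b) := by simp
  rw [hmap, C_sub_X_mul_C_dvd_iff_eval_div_eq_zero hbL]
  let g : L →+* K := IsFractionRing.lift hf
  have hg (r : R) : g (algebraMap R L r) = f r := IsFractionRing.lift_algebraMap hf r
  have hcomp : g.comp (algebraMap R L) = f := RingHom.ext hg
  rw [← map_eq_zero g, ← eval₂_at_apply, eval₂_map, hcomp, map_div₀, hg, hg]

end GaussLemma

section MvPolynomial

open MvPolynomial

/-- `R[X₀, …, Xₙ]` as the ring of polynomials in its last variable `Xₙ` over `R[X₀, …, Xₙ₋₁]`,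
the analogue for the last variable of `MvPolynomial.finSuccEquiv`. -/
def lastVariableEquiv (R : Type*) [CommSemiring R] (n : ℕ) :
    MvPolynomial (Fin (n + 1)) R ≃ₐ[R] Polynomial (MvPolynomial (Fin n) R) :=
  (renameEquiv R finSuccEquivLast).trans (optionEquivLeft R (Fin n))

variable {R A : Type*} [CommSemiring R] [CommSemiring A] [Algebra R A] {n : ℕ}

lemma lastVariableEquiv_C (r : R) :
    lastVariableEquiv R n (C r) = Polynomial.C (C r) :=
  (lastVariableEquiv R n).commutes r

lemma lastVariableEquiv_X_castSucc (i : Fin n) :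
    lastVariableEquiv R n (X i.castSucc) = Polynomial.C (X i) := by
  simp [lastVariableEquiv]

lemma lastVariableEquiv_X_last :
    lastVariableEquiv R n (X (Fin.last n)) = Polynomial.X := by
  simp [lastVariableEquiv]

lemma eval₂_lastVariableEquiv (g : Fin n → A) (z : A) (P : MvPolynomial (Fin (n + 1)) R) :
    (lastVariableEquiv R n P).eval₂ (aeval g : MvPolynomial (Fin n) R →ₐ[R] A) z =
      aeval (Fin.snoc g z : Fin (n + 1) → A) P := by
  induction P using MvPolynomial.induction_on with
  | C r => simp [lastVariableEquiv_C]
  | add P Q hP hQ => simp only [map_add, Polynomial.eval₂_add, hP, hQ]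
  | mul_X P i hP =>
    rw [map_mul, Polynomial.eval₂_mul, hP, map_mul, aeval_X]
    congr 1
    refine Fin.lastCases ?_ (fun i => ?_) i
    · rw [lastVariableEquiv_X_last, Polynomial.eval₂_X, Fin.snoc_last]
    · rw [lastVariableEquiv_X_castSucc, Polynomial.eval₂_C, Fin.snoc_castSucc]
      exact aeval_X g i

lemma X_not_dvd_of_coeff_ne_zero {σ R : Type*} [CommSemiring R] {P : MvPolynomial σ R} {i : σ}
    {m : σ →₀ ℕ} (hm : m i = 0) (hP : coeff m P ≠ 0) : ¬ X i ∣ P := by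
  rintro ⟨Q, rfl⟩
  exact hP (by rw [coeff_X_mul', if_neg (by simpa using hm)])

end MvPolynomial

section StepEval

variable {K : Type} [Field K] [Algebra ℂ K] {St : Finset (ℤ × ℤ)} {w : ℤ × ℤ → ℂ} {u v : K}

lemma stepEval_mem (E : IntermediateField ℂ K) (hu : u ∈ E) (hv : v ∈ E) :
    stepEval St w u v ∈ E :=
  sum_mem fun _ _ => mul_mem (mul_mem (E.algebraMap_mem _) (zpow_mem hu _)) (zpow_mem hv _)

lemma stepEval_map_swap (St : Finset (ℤ × ℤ)) (w : ℤ × ℤ → ℂ) (u v : K) :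
    stepEval (St.map (Equiv.prodComm ℤ ℤ).toEmbedding) (w ∘ Prod.swap) v u =
      stepEval St w u v := by
  simp [stepEval, mul_right_comm]

lemma sum_row_ne_zero (hw : ∀ p ∈ St, w p ≠ 0) (hu : Transcendental ℂ u) {q : ℤ × ℤ}
    (hq : q ∈ St) : ∑ p ∈ St with p.2 = q.2, algebraMap ℂ K (w p) * u ^ p.1 ≠ 0 := by
  intro h
  have hfiber := sum_fiber_eq_of_sum_zpow_eq hu _ w Prod.fst (h.trans (map_zero _).symm) q.1
  have hsingle : ({p ∈ {p ∈ St | p.2 = q.2} | p.1 = q.1} : Finset (ℤ × ℤ)) = {q} := by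
    ext p
    simp only [Finset.mem_filter, Finset.mem_singleton, Prod.ext_iff]
    grind
  rw [hsingle, Finset.sum_singleton, ite_self] at hfiber
  exact hw q hq hfiber

lemma transcendental_stepEval (hw : ∀ p ∈ St, w p ≠ 0) (hS : ∃ p ∈ St, p.2 ≠ 0)
    (h : AlgebraicIndependent ℂ ![u, v]) : Transcendental ℂ⟮u⟯ (stepEval St w u v) := by
  obtain ⟨hu, hv⟩ := algebraicIndependent_pair_iff.1 h
  obtain ⟨q, hq, hq₀⟩ := hS
  intro hs
  let E := algebraicClosure ℂ⟮u⟯ K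
  let u' : E := algebraMap ℂ⟮u⟯ E (AdjoinSimple.gen ℂ u)
  have hrow := sum_fiber_eq_of_sum_zpow_eq (F := E) hv.algebraicClosure St
    (fun p => algebraMap ℂ E (w p) * u' ^ p.1) Prod.snd
    (s := ⟨stepEval St w u v, mem_algebraicClosure_iff.2 hs⟩) (by rfl) q.2
  have hval := congrArg (algebraMap E K) (hrow.trans (if_neg hq₀))
  simp only [map_sum, map_mul, map_zpow₀, map_zero] at hval
  exact sum_row_ne_zero hw hu hq hval

lemma algebraicIndependent_of_stepEval_eq (hw : ∀ p ∈ St, w p ≠ 0) (hS : ∃ p ∈ St, p.2 ≠ 0)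
    {v' : K} (h : AlgebraicIndependent ℂ ![u, v])
    (he : stepEval St w u v = stepEval St w u v') : AlgebraicIndependent ℂ ![u, v'] := by
  refine algebraicIndependent_pair_iff.2 ⟨(algebraicIndependent_pair_iff.1 h).1, fun hv' => ?_⟩
  let E := (algebraicClosure ℂ⟮u⟯ K).restrictScalars ℂ
  have hu : u ∈ E := (algebraicClosure ℂ⟮u⟯ K).algebraMap_mem (AdjoinSimple.gen ℂ u)
  have hmem : stepEval St w u v' ∈ E := stepEval_mem E hu (mem_algebraicClosure_iff.2 hv')
  exact transcendental_stepEval hw hS h (he ▸ mem_algebraicClosure_iff.1 hmem)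

lemma algebraicIndependent_of_adj (hw : ∀ p ∈ St, w p ≠ 0) (hX : ∃ p ∈ St, p.1 ≠ 0)
    (hY : ∃ p ∈ St, p.2 ≠ 0) {a b : K × K} (hab : Adj St w a b)
    (ha : AlgebraicIndependent ℂ ![a.1, a.2]) : AlgebraicIndependent ℂ ![b.1, b.2] := by
  rcases hab with ⟨hfst, hS⟩ | ⟨hsnd, hS⟩
  · rw [← hfst] at hS ⊢
    exact algebraicIndependent_of_stepEval_eq hw hY ha hS
  · rw [← hsnd] at hS ⊢
    rw [← stepEval_map_swap, ← stepEval_map_swap St w b.1] at hS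
    refine algebraicIndependent_pair_swap (algebraicIndependent_of_stepEval_eq ?_ ?_
      (algebraicIndependent_pair_swap ha) hS)
    · exact Finset.forall_mem_map.2 hw
    · obtain ⟨p, hp, hp₀⟩ := hX
      exact ⟨p.swap, Finset.mem_map_of_mem _ hp, hp₀⟩

lemma algebraicIndependent_of_mem_orbit (hw : ∀ p ∈ St, w p ≠ 0) (hX : ∃ p ∈ St, p.1 ≠ 0)
    (hY : ∃ p ∈ St, p.2 ≠ 0) {x y : K} (hxy : AlgebraicIndependent ℂ ![x, y]) {a : K × K}
    (ha : a ∈ orbit St w x y) : AlgebraicIndependent ℂ ![a.1, a.2] :=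
  Relation.ReflTransGen.rec hxy (fun _ => algebraicIndependent_of_adj hw hX hY) ha

lemma stepEval_eq_of_mem_orbit {x y : K} {a : K × K} (ha : a ∈ orbit St w x y) :
    stepEval St w a.1 a.2 = stepEval St w x y :=
  Relation.ReflTransGen.rec rfl
    (fun _ hadj ih => (hadj.elim And.right And.right).symm.trans ih) ha

end StepEval

section KernelPolynomial

open MvPolynomial

/-- The polynomial `X^mx * Y^my * S(X,Y)` (under the hypothesis `ExponentBounds`), which is minus
the coefficient of `t` in the kernel polynomial. -/
def stepNumerator (St : Finset (ℤ × ℤ)) (w : ℤ × ℤ → ℂ) (mx my : ℕ) : MvPolynomial (Fin 2) ℂ :=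
  ∑ p ∈ St, C (w p) * X 0 ^ (p.1 + (mx : ℤ)).toNat * X 1 ^ (p.2 + (my : ℤ)).toNat

variable {St : Finset (ℤ × ℤ)} {w : ℤ × ℤ → ℂ} {mx my : ℕ}

lemma lastVariableEquiv_kernelPoly :
    lastVariableEquiv ℂ 2 (kernelPoly St w mx my) =
      Polynomial.C (X 0 ^ mx * X 1 ^ my) -
        Polynomial.X * Polynomial.C (stepNumerator St w mx my) := by
  have h₀ := lastVariableEquiv_X_castSucc (R := ℂ) (0 : Fin 2)
  have h₁ := lastVariableEquiv_X_castSucc (R := ℂ) (1 : Fin 2)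
  have h₂ := lastVariableEquiv_X_last (R := ℂ) (n := 2)
  simp only [Fin.castSucc_zero, Fin.castSucc_one, Fin.reduceLast] at h₀ h₁ h₂
  simp only [kernelPoly, stepNumerator, map_sub, map_mul, map_pow, map_sum, h₀, h₁, h₂,
    lastVariableEquiv_C]

lemma coeff_stepNumerator (hb : ExponentBounds St mx my) {p : ℤ × ℤ} (hp : p ∈ St) :
    coeff (Finsupp.single 0 (p.1 + (mx : ℤ)).toNat + Finsupp.single 1 (p.2 + (my : ℤ)).toNat)
      (stepNumerator St w mx my) = w p := by
  have hmonomial (q : ℤ × ℤ) : C (w q) * X 0 ^ (q.1 + (mx : ℤ)).toNat *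
      X 1 ^ (q.2 + (my : ℤ)).toNat = monomial (Finsupp.single (0 : Fin 2) (q.1 + (mx : ℤ)).toNat +
        Finsupp.single 1 (q.2 + (my : ℤ)).toNat) (w q) := by
    rw [mul_assoc, X_pow_eq_monomial, X_pow_eq_monomial, monomial_mul, C_mul_monomial]
    simp
  simp only [stepNumerator, hmonomial, coeff_sum, coeff_monomial]
  rw [Finset.sum_eq_single p (fun q hq hqp => if_neg fun hexp => hqp ?_) (absurd hp), if_pos rfl]
  have h₀ := DFunLike.congr_fun hexp 0
  have h₁ := DFunLike.congr_fun hexp 1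
  simp only [Finsupp.add_apply, Finsupp.single_eq_same, Finsupp.single_apply, Fin.isValue,
    one_ne_zero, zero_ne_one, if_false, add_zero, zero_add] at h₀ h₁
  have := hb.lowerX q hq
  have := hb.lowerX p hp
  have := hb.lowerY q hq
  have := hb.lowerY p hp
  ext <;> omega

lemma stepNumerator_ne_zero (hw : ∀ p ∈ St, w p ≠ 0) (hb : ExponentBounds St mx my) :
    stepNumerator St w mx my ≠ 0 := by
  obtain ⟨p, hp, -⟩ := hb.attainX
  exact fun hN => hw p hp (by rw [← coeff_stepNumerator (w := w) hb hp, hN, coeff_zero])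

lemma isRelPrime_X_pow_mul_X_pow_stepNumerator (hw : ∀ p ∈ St, w p ≠ 0)
    (hb : ExponentBounds St mx my) :
    IsRelPrime (X 0 ^ mx * X 1 ^ my) (stepNumerator St w mx my) := by
  obtain ⟨p, hp, hpX⟩ := hb.attainX
  obtain ⟨q, hq, hqY⟩ := hb.attainY
  have hX : ¬ X 0 ∣ stepNumerator St w mx my :=
    X_not_dvd_of_coeff_ne_zero (by simp [hpX]) ((coeff_stepNumerator hb hp).trans_ne (hw p hp))
  have hY : ¬ X 1 ∣ stepNumerator St w mx my :=
    X_not_dvd_of_coeff_ne_zero (by simp [hqY]) ((coeff_stepNumerator hb hq).trans_ne (hw q hq))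
  exact IsRelPrime.mul_left (X_prime.irreducible.isRelPrime_iff_not_dvd.2 hX).pow_left
    (X_prime.irreducible.isRelPrime_iff_not_dvd.2 hY).pow_left

variable {K : Type} [Field K] [Algebra ℂ K] {u v : K}

lemma aeval_stepNumerator (hb : ExponentBounds St mx my) (hu : u ≠ 0) (hv : v ≠ 0) :
    aeval ![u, v] (stepNumerator St w mx my) = u ^ mx * v ^ my * stepEval St w u v := by
  rw [stepNumerator, stepEval, Finset.mul_sum, map_sum]
  refine Finset.sum_congr rfl fun p hp => ?_
  have hshift {z : K} (hz : z ≠ 0) {i : ℤ} {m : ℕ} (hi : -(m : ℤ) ≤ i) :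
      z ^ (i + (m : ℤ)).toNat = z ^ i * z ^ m := by
    rw [← zpow_natCast, Int.toNat_of_nonneg (by omega), zpow_add₀ hz, zpow_natCast]
  simp only [map_mul, map_pow, aeval_X, aeval_C, Matrix.cons_val_zero, Matrix.cons_val_one,
    hshift hu (hb.lowerX p hp), hshift hv (hb.lowerY p hp)]
  ring

lemma aeval_eq_zero_iff_kernelPoly_dvd (hw : ∀ p ∈ St, w p ≠ 0)
    (hb : ExponentBounds St mx my) (h : AlgebraicIndependent ℂ ![u, v])
    (P : MvPolynomial (Fin 3) ℂ) :
    aeval ![u, v, (stepEval St w u v)⁻¹] P = 0 ↔ kernelPoly St w mx my ∣ P := by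
  have hu : u ≠ 0 := h.ne_zero 0
  have hv : v ≠ 0 := h.ne_zero 1
  have hquot : aeval ![u, v] (X 0 ^ mx * X 1 ^ my : MvPolynomial (Fin 2) ℂ) /
      aeval ![u, v] (stepNumerator St w mx my) = (stepEval St w u v)⁻¹ := by
    rw [aeval_stepNumerator hb hu hv]
    simp [div_mul_cancel_left₀, hu, hv]
  have hsnoc : ![u, v, (stepEval St w u v)⁻¹] =
      (Fin.snoc ![u, v] (stepEval St w u v)⁻¹ : Fin 3 → K) := by
    ext i
    fin_cases i <;> rfl
  rw [hsnoc, ← eval₂_lastVariableEquiv, ← map_dvd_iff (lastVariableEquiv ℂ 2),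
    lastVariableEquiv_kernelPoly, ← hquot]
  exact (C_sub_X_mul_C_dvd_iff_eval₂_div_eq_zero h
    (isRelPrime_X_pow_mul_X_pow_stepNumerator hw hb) (stepNumerator_ne_zero hw hb)).symm

end KernelPolynomial

section FieldsOfValues

variable {K : Type} [Field K] [Algebra ℂ K] {St : Finset (ℤ × ℤ)} {w : ℤ × ℤ → ℂ} {mx my : ℕ}
  {x y : K}

lemma regRange_eq_adjoin (hw : ∀ p ∈ St, w p ≠ 0) (hb : ExponentBounds St mx my)
    (hxy : AlgebraicIndependent ℂ ![x, y]) (s : Set (Fin 3)) :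
    regRange St w x y mx my s =
      (adjoin ℂ (![x, y, (stepEval St w x y)⁻¹] '' s) : Set K) := by
  have hdvd (B : MvPolynomial (Fin 3) ℂ) : evalXY St w x y B = 0 ↔ kernelPoly St w mx my ∣ B :=
    aeval_eq_zero_iff_kernelPoly_dvd hw hb hxy B
  ext z
  rw [SetLike.mem_coe, mem_adjoin_image_iff]
  constructor
  · rintro ⟨A, B, hA, hB, -, hz⟩
    exact ⟨A, hA, B, hB, hz⟩
  · rintro ⟨A, hA, B, hB, (hz : z = evalXY St w x y A / evalXY St w x y B)⟩
    by_cases hB₀ : evalXY St w x y B = 0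
    · rw [hB₀, div_zero] at hz
      exact ⟨0, 1, zero_mem _, one_mem _, (hdvd 1).not.1 (by simp [evalXY, evalPt]),
        by simp [hz, evalXY, evalPt]⟩
    · exact ⟨A, B, hA, hB, (hdvd B).not.1 hB₀, hz⟩

variable (St w x y)

lemma adjoin_image_univ_eq_kxyF :
    adjoin ℂ (![x, y, (stepEval St w x y)⁻¹] '' Set.univ) = kxyF x y := by
  have himage : ![x, y, (stepEval St w x y)⁻¹] '' Set.univ = {(stepEval St w x y)⁻¹, x, y} := by
    ext z
    simp [eq_comm, or_assoc, or_comm]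
  rw [himage, kxyF, adjoin_insert_of_mem]
  exact inv_mem (stepEval_mem _ (subset_adjoin ℂ _ (by simp)) (subset_adjoin ℂ _ (by simp)))

lemma adjoin_image_two_eq_kF :
    adjoin ℂ (![x, y, (stepEval St w x y)⁻¹] '' {2}) = kF St w x y := by
  simpa [kF] using adjoin_insert_inv (F := ℂ) (stepEval St w x y) ∅

lemma adjoin_image_zero_two_eq_kxF :
    adjoin ℂ (![x, y, (stepEval St w x y)⁻¹] '' {0, 2}) = kxF St w x y := by
  rw [Set.image_pair, kxF, Set.pair_comm x]
  exact (congrArg _ (Set.pair_comm _ _)).trans (adjoin_insert_inv (stepEval St w x y) {x})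

lemma adjoin_image_one_two_eq_kyF :
    adjoin ℂ (![x, y, (stepEval St w x y)⁻¹] '' {1, 2}) = kyF St w x y := by
  rw [Set.image_pair, kyF, Set.pair_comm y]
  exact (congrArg _ (Set.pair_comm _ _)).trans (adjoin_insert_inv (stepEval St w x y) {y})

end FieldsOfValues

lemma NotUnivariate.exists_fst_ne_zero {St : Finset (ℤ × ℤ)} (hS : NotUnivariate St) :
    ∃ p ∈ St, p.1 ≠ 0 := by
  obtain ⟨⟨p, hp, q, hq, hpq⟩, -⟩ := hS
  grind

lemma NotUnivariate.exists_snd_ne_zero {St : Finset (ℤ × ℤ)} (hS : NotUnivariate St) :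
    ∃ p ∈ St, p.2 ≠ 0 := by
  obtain ⟨-, p, hp, q, hq, hpq⟩ := hS
  grind

theorem stmt9_general {K : Type} [Field K] [Algebra ℂ K]
    (St : Finset (ℤ × ℤ)) (w : ℤ × ℤ → ℂ) (x y : K) (mx my : ℕ)
    (hw : ∀ p ∈ St, w p ≠ 0) (hX : ∃ p ∈ St, p.1 ≠ 0) (hY : ∃ p ∈ St, p.2 ≠ 0)
    (hxy : AlgebraicIndependent ℂ ![x, y]) (hb : ExponentBounds St mx my) :
    (∀ B : MvPolynomial (Fin 3) ℂ, ∀ a ∈ orbit St w x y,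
      (evalPt St w x y B a ≠ 0 ↔ ¬ kernelPoly St w mx my ∣ B)) ∧
    RingHom.ker
        (MvPolynomial.aeval ![x, y, (stepEval St w x y)⁻¹] :
          MvPolynomial (Fin 3) ℂ →ₐ[ℂ] K) =
      Ideal.span {kernelPoly St w mx my} ∧
    regRange St w x y mx my Set.univ = (kxyF x y : Set K) ∧
    regRange St w x y mx my ({2} : Set (Fin 3)) = (kF St w x y : Set K) ∧
    regRange St w x y mx my ({0, 2} : Set (Fin 3)) = (kxF St w x y : Set K) ∧
    regRange St w x y mx my ({1, 2} : Set (Fin 3)) = (kyF St w x y : Set K) := by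
  simp only [regRange_eq_adjoin hw hb hxy, adjoin_image_univ_eq_kxyF, adjoin_image_two_eq_kF,
    adjoin_image_zero_two_eq_kxF, adjoin_image_one_two_eq_kyF, and_true]
  refine ⟨fun B a ha => ?_, ?_⟩
  · rw [evalPt, ← stepEval_eq_of_mem_orbit ha]
    exact (aeval_eq_zero_iff_kernelPoly_dvd hw hb
      (algebraicIndependent_of_mem_orbit hw hX hY hxy ha) B).not
  · ext P
    rw [RingHom.mem_ker, Ideal.mem_span_singleton]
    exact aeval_eq_zero_iff_kernelPoly_dvd hw hb hxy P

/-- (a) the evaluation of a regular fraction at a point of the orbit is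
well defined, i.e. the denominator does not vanish iff it is not divisible by `K̃`;
(b) the kernel of the evaluation homomorphism `ℂ[X,Y,t] → 𝕂`, `X ↦ x, Y ↦ y,
t ↦ 1/S(x,y)`, is the principal ideal generated by `K̃`, and the induced map on
regular fractions maps `ℂ(X,Y,t)` mod `K̃` onto `k(x,y)`, `ℂ(t)` onto `k`,
`ℂ(X,t)` onto `k(x)` and `ℂ(Y,t)` onto `k(y)`. -/
theorem stmt9 {K : Type} [Field K] [Algebra ℂ K]
    (St : Finset (ℤ × ℤ)) (w : ℤ × ℤ → ℂ) (x y : K) (mx my : ℕ)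
    (hset : Setting St w x y) (hb : ExponentBounds St mx my) :
    (∀ A B : MvPolynomial (Fin 3) ℂ, IsRelPrime A B →
      ∀ a ∈ orbit St w x y,
        (evalPt St w x y B a ≠ 0 ↔ ¬ kernelPoly St w mx my ∣ B)) ∧
    RingHom.ker
        (MvPolynomial.aeval ![x, y, (stepEval St w x y)⁻¹] :
          MvPolynomial (Fin 3) ℂ →ₐ[ℂ] K) =
      Ideal.span {kernelPoly St w mx my} ∧
    regRange St w x y mx my Set.univ = (kxyF x y : Set K) ∧
    regRange St w x y mx my ({2} : Set (Fin 3)) = (kF St w x y : Set K) ∧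
    regRange St w x y mx my ({0, 2} : Set (Fin 3)) = (kxF St w x y : Set K) ∧
    regRange St w x y mx my ({1, 2} : Set (Fin 3)) = (kyF St w x y : Set K) := by
  have h := stmt9_general St w x y mx my hset.weight_ne hset.notUniv.exists_fst_ne_zero
    hset.notUniv.exists_snd_ne_zero hset.indep hb
  exact ⟨fun _ B _ => h.1 B, h.2⟩

end QuadrantWalk
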